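/- For every ℓ > 0, the function w_ℓ is continuous on S. -/

import Mathlib

open scoped RealInnerProductSpace

/-- The regularized and partially linearized merit function
`w_ℓ(x) = max_{y ∈ S} min_i (⟨∇f_i(x), x - y⟩ + g_i(x) - g_i(y) - (ℓ/2)‖x - y‖²)`,
where `Gf i x = ∇f_i(x)`. -/
noncomputable def meritW {n m : ℕ} (ℓ : ℝ) (S : Set (EuclideanSpace ℝ (Fin n)))
    (Gf : Fin m → EuclideanSpace ℝ (Fin n) → EuclideanSpace ℝ (Fin n))
    (g : Fin m → EuclideanSpace ℝ (Fin n) → ℝ)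
    (x : EuclideanSpace ℝ (Fin n)) : ℝ :=
  sSup ((fun y => ⨅ i, (⟪Gf i x, x - y⟫ + g i x - g i y - ℓ / 2 * ‖x - y‖ ^ 2)) '' S)

/-!
A convex function has an affine minorant, so the quadratic penalty forces the objective
`φ x y = min_i (…)` to tend to `-∞` as `y → ∞`, locally uniformly in `x`. Near a given point the
supremum over `S` is therefore a supremum over a fixed relatively compact part of `S`, and a
supremum of a jointly continuous function over a compact set depends continuously on the parameter.
-/

open Filter Set Topology Bornology

section Supremum

variable {X Y α : Type*} [TopologicalSpace X] [TopologicalSpace Y]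
  [ConditionallyCompleteLinearOrder α]

theorem csSup_image_inter_eq_of_forall_notMem_le {β : Type*} {f : β → α} {S K : Set β} {z : β}
    (hzS : z ∈ S) (hzK : z ∈ K) (hle : ∀ y ∉ K, f y ≤ f z) :
    sSup (f '' (S ∩ K)) = sSup (f '' S) := by
  refine csSup_eq_csSup_of_forall_exists_le ?_ ?_
  · rintro _ ⟨y, hy, rfl⟩
    exact ⟨f y, mem_image_of_mem f hy.1, le_rfl⟩
  · rintro _ ⟨y, hyS, rfl⟩
    by_cases hyK : y ∈ K
    · exact ⟨f y, mem_image_of_mem f ⟨hyS, hyK⟩, le_rfl⟩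
    · exact ⟨f z, mem_image_of_mem f ⟨hzS, hzK⟩, hle y hyK⟩

variable [TopologicalSpace α]

theorem csSup_image_closure_eq [ClosedIicTopology α] {f : Y → α} {S : Set Y} (hf : Continuous f)
    (hS : S.Nonempty) (hbdd : BddAbove (f '' S)) : sSup (f '' closure S) = sSup (f '' S) := by
  have hlub : IsLUB (f '' closure S) (sSup (f '' S)) :=
    (isLUB_iff_of_subset_of_subset_closure (image_mono subset_closure)
      (image_closure_subset_closure_image hf)).1 (isLUB_csSup (hS.image f) hbdd)
  exact hlub.csSup_eq (hS.closure.image f)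

variable [OrderTopology α] [R1Space Y] {φ : X → Y → α}

theorem continuous_csSup_image_of_subset_isCompact {S K : Set Y} (hφ : Continuous ↿φ)
    (hS : S.Nonempty) (hK : IsCompact K) (hSK : S ⊆ K) :
    Continuous fun x ↦ sSup (φ x '' S) := by
  have hφx (x : X) : Continuous (φ x) := hφ.comp (.prodMk_right x)
  have hbdd (x : X) : BddAbove (φ x '' S) :=
    (hK.bddAbove_image (hφx x).continuousOn).mono (image_mono hSK)
  simpa only [csSup_image_closure_eq (hφx _) hS (hbdd _)] using
    (hK.closure_of_subset hSK).continuous_sSup hφ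

theorem continuous_csSup_image_of_tendsto_atBot [NoMinOrder α] {S : Set Y} (hφ : Continuous ↿φ)
    (hS : S.Nonempty) (hcoercive : ∀ x, Tendsto ↿φ (𝓝 x ×ˢ cocompact Y) atBot) :
    Continuous fun x ↦ sSup (φ x '' S) := by
  refine continuous_iff_continuousAt.2 fun x₀ ↦ ?_
  obtain ⟨z, hzS⟩ := hS
  obtain ⟨c, hc⟩ := exists_lt (φ x₀ z)
  have hcz : ∀ᶠ x in 𝓝 x₀, c < φ x z :=
    (hφ.comp (.prodMk_left z)).continuousAt.eventually_const_lt hc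
  obtain ⟨near, hnear, far, hfar, hle⟩ :=
    eventually_prod_iff.1 ((hcoercive x₀).eventually_le_atBot c)
  obtain ⟨K, hK, hKfar⟩ := mem_cocompact.1 hfar
  have hcont : Continuous fun x ↦ sSup (φ x '' (S ∩ insert z K)) :=
    continuous_csSup_image_of_subset_isCompact hφ ⟨z, hzS, mem_insert z K⟩ (hK.insert z)
      inter_subset_right
  refine hcont.continuousAt.congr ?_
  filter_upwards [hcz, hnear] with x hcx hx
  refine csSup_image_inter_eq_of_forall_notMem_le hzS (mem_insert z K) fun y hy ↦ ?_
  exact (hle hx (hKfar fun hyK ↦ hy (mem_insert_of_mem z hyK))).trans hcx.le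

end Supremum

theorem exists_affine_le_of_convexOn_univ {E : Type*} [AddCommGroup E] [Module ℝ E]
    [TopologicalSpace E] [IsTopologicalAddGroup E] [ContinuousSMul ℝ E] [LocallyConvexSpace ℝ E]
    {g : E → ℝ} (hconv : ConvexOn ℝ univ g) (hg : LowerSemicontinuous g) :
    ∃ (l : E →L[ℝ] ℝ) (c : ℝ), ∀ y, l y + c ≤ g y := by
  obtain ⟨l, c, hle, -⟩ := hconv.exists_affine_le_of_lt (𝕜 := ℝ) (mem_univ 0)
    (sub_one_lt (g 0)) isClosed_univ (lowerSemicontinuousOn_univ_iff.2 hg)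
  exact ⟨l, c, fun y ↦ hle ⟨y, mem_univ y⟩⟩

theorem tendsto_norm_sub_nhds_prod_cobounded {E : Type*} [SeminormedAddCommGroup E] (x₀ : E) :
    Tendsto (fun p : E × E ↦ ‖p.1 - p.2‖) (𝓝 x₀ ×ˢ cobounded E) atTop := by
  have hsnd : Tendsto (fun p : E × E ↦ ‖p.2‖) (𝓝 x₀ ×ˢ cobounded E) atTop :=
    tendsto_norm_cobounded_atTop.comp tendsto_snd
  have hfst : Tendsto (fun p : E × E ↦ -‖p.1‖) (𝓝 x₀ ×ˢ cobounded E) (𝓝 (-‖x₀‖)) :=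
    (tendsto_fst.norm).neg
  refine tendsto_atTop_mono (fun p ↦ ?_) (hsnd.atTop_add hfst)
  linarith [norm_sub_norm_le p.2 p.1, norm_sub_rev p.1 p.2]

section Gap

variable {E ι : Type*} [NormedAddCommGroup E] [InnerProductSpace ℝ E] {ℓ : ℝ}

theorem inner_sub_quadratic_le_of_affine_le {g : E → ℝ} {l : E →L[ℝ] ℝ} {c : ℝ}
    (hle : ∀ y, l y + c ≤ g y) (v x y : E) :
    ⟪v, x - y⟫ + g x - g y - ℓ / 2 * ‖x - y‖ ^ 2 ≤
      ‖x - y‖ * (‖v‖ + ‖l‖ - ℓ / 2 * ‖x - y‖) + (g x - l x - c) := by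
  have hinner : ⟪v, x - y⟫ ≤ ‖v‖ * ‖x - y‖ := real_inner_le_norm v (x - y)
  have hl : l x - l y ≤ ‖l‖ * ‖x - y‖ :=
    map_sub l x y ▸ (le_abs_self _).trans (l.le_opNorm (x - y))
  linarith [hle y]

theorem tendsto_inner_sub_quadratic_atBot {G : E → E} {g : E → ℝ} {x₀ : E} (hℓ : 0 < ℓ)
    (hG : ContinuousAt G x₀) (hg : Continuous g) (hconv : ConvexOn ℝ univ g) :
    Tendsto (fun p : E × E ↦ ⟪G p.1, p.1 - p.2⟫ + g p.1 - g p.2 - ℓ / 2 * ‖p.1 - p.2‖ ^ 2)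
      (𝓝 x₀ ×ˢ cobounded E) atBot := by
  obtain ⟨l, c, hle⟩ := exists_affine_le_of_convexOn_univ hconv hg.lowerSemicontinuous
  have hdist := tendsto_norm_sub_nhds_prod_cobounded x₀
  have hslope : Tendsto (fun p : E × E ↦ ‖G p.1‖ + ‖l‖ - ℓ / 2 * ‖p.1 - p.2‖)
      (𝓝 x₀ ×ˢ cobounded E) atBot :=
    ((hG.tendsto.comp tendsto_fst).norm.add_const ‖l‖).add_atBot
      (tendsto_neg_atTop_atBot.comp (hdist.const_mul_atTop (half_pos hℓ)))
  have hrest : Tendsto (fun p : E × E ↦ g p.1 - l p.1 - c)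
      (𝓝 x₀ ×ˢ cobounded E) (𝓝 (g x₀ - l x₀ - c)) :=
    (((hg.sub l.continuous).sub continuous_const).tendsto x₀).comp tendsto_fst
  exact tendsto_atBot_mono (fun p ↦ inner_sub_quadratic_le_of_affine_le hle (G p.1) p.1 p.2)
    ((hdist.atTop_mul_atBot₀ hslope).atBot_add hrest)

/-- The objective `min_i (⟨G_i(x), x - y⟩ + g_i(x) - g_i(y) - (ℓ/2)‖x - y‖²)` whose supremum over
`y ∈ S` is the merit function `w_ℓ(x)`. The vector fields `G i` play the role of the `∇f_i`. -/
noncomputable def regularizedGap (ℓ : ℝ) (G : ι → E → E) (g : ι → E → ℝ) (x y : E) : ℝ :=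
  ⨅ i, (⟪G i x, x - y⟫ + g i x - g i y - ℓ / 2 * ‖x - y‖ ^ 2)

variable [Finite ι] {G : ι → E → E} {g : ι → E → ℝ}

theorem continuous_regularizedGap [Nonempty ι] (hG : ∀ i, Continuous (G i))
    (hg : ∀ i, Continuous (g i)) : Continuous ↿(regularizedGap ℓ G g) := by
  have := Fintype.ofFinite ι
  simp only [Function.HasUncurry.uncurry, id, regularizedGap, ← Finset.inf'_univ_eq_ciInf]
  refine Continuous.finset_inf'_apply _ fun i _ ↦ ?_
  have := hG i
  have := hg i
  fun_prop

theorem tendsto_regularizedGap_atBot {i : ι} {x₀ : E} (hℓ : 0 < ℓ) (hG : ContinuousAt (G i) x₀)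
    (hg : Continuous (g i)) (hconv : ConvexOn ℝ univ (g i)) :
    Tendsto ↿(regularizedGap ℓ G g) (𝓝 x₀ ×ˢ cobounded E) atBot :=
  tendsto_atBot_mono (fun _ ↦ ciInf_le (finite_range _).bddBelow i)
    (tendsto_inner_sub_quadratic_atBot hℓ hG hg hconv)

theorem meritW_continuousOn_general [FiniteDimensional ℝ E] {S : Set E} {i : ι} (hS : S.Nonempty)
    (hG : ∀ j, Continuous (G j)) (hg : ∀ j, Continuous (g j)) (hconv : ConvexOn ℝ univ (g i))
    (hℓ : 0 < ℓ) : Continuous fun x ↦ sSup (regularizedGap ℓ G g x '' S) := by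
  have : Nonempty ι := ⟨i⟩
  have : ProperSpace E := FiniteDimensional.proper_real E
  refine continuous_csSup_image_of_tendsto_atBot (continuous_regularizedGap hG hg) hS fun x ↦ ?_
  rw [← Metric.cobounded_eq_cocompact]
  exact tendsto_regularizedGap_atBot hℓ (hG i).continuousAt (hg i) hconv

end Gap

/-- for every `ℓ > 0`, `w_ℓ` is continuous on `S`. -/
theorem meritW_continuousOn {n m : ℕ} (hm : 0 < m)
    (S : Set (EuclideanSpace ℝ (Fin n))) (hS : S.Nonempty)
    (hSclosed : IsClosed S) (hSconv : Convex ℝ S)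
    (f g : Fin m → EuclideanSpace ℝ (Fin n) → ℝ)
    (Gf : Fin m → EuclideanSpace ℝ (Fin n) → EuclideanSpace ℝ (Fin n))
    (hGf : ∀ i y, HasGradientAt (f i) (Gf i y) y)
    (hGfc : ∀ i, Continuous (Gf i))
    (hgconv : ∀ i, ConvexOn ℝ Set.univ (g i))
    (ℓ : ℝ) (hℓ : 0 < ℓ) :
    ContinuousOn (meritW ℓ S Gf g) S := by
  have hg (i : Fin m) : Continuous (g i) :=
    continuousOn_univ.1 ((hgconv i).continuousOn isOpen_univ)
  exact (meritW_continuousOn_general hS hGfc hg (hgconv ⟨0, hm⟩) hℓ).continuousOn
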